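/- For any 1/2 < t < 1 and any real x ≥ 2e^{16/(1-t)²}, one has (7/40)·x^{1-t}/((1-t)(log x)^t) < ∑_{n ≤ x-1} p_n^{-t} < (20/3)·x^{1-t}/((1-t)(log x)^t), where the sum ranges over all positive integers n with n ≤ x−1. -/

import Mathlib

/-- The `n`-th prime number, 1-indexed: `nthPrime 1 = 2`, `nthPrime 2 = 3`, ... -/
noncomputable def nthPrime (n : ℕ) : ℕ := Nat.nth Nat.Prime (n - 1)

/-!
Chebyshev's bounds on `π` give `p_n ≤ 5 n log x` for all `n ≤ x - 1` and `p_n ≥ n log x / 6` for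
`√x ≤ n`, while comparison with `∫ u ^ (-t)` shows that `∑ n ^ (-t)` over `n ≤ x` is about
`x ^ (1 - t) / (1 - t)`. For `n ≤ √x` the trivial bound `p_n > n` suffices: these terms contribute
at most `√x ^ (1 - t) / (1 - t)`, which is absorbed into the main term because
`x ≥ exp (16 / (1 - t) ^ 2)` forces `√x ^ (1 - t) ≥ 2 log x`.
-/

open Real Finset
open scoped Nat.Prime

lemma ten_mul_le_exp {v : ℝ} (hv : 4 ≤ v) : 10 * v ≤ exp v := by
  have h_exp_four : 40 ≤ exp 4 := by
    calc (40 : ℝ) ≤ 2.7 ^ 4 := by norm_num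
      _ ≤ exp 1 ^ 4 := by gcongr; linarith [exp_one_gt_d9]
      _ = exp 4 := by rw [← exp_nat_mul]; norm_num
  calc 10 * v ≤ 40 * (v - 4 + 1) := by linarith
    _ ≤ exp 4 * exp (v - 4) := by
      gcongr
      exact add_one_le_exp _
    _ = exp v := by rw [← exp_add, add_sub_cancel]

lemma five_mul_log_le_sqrt {x : ℝ} (hx : exp 8 ≤ x) : 5 * log x ≤ √x := by
  have hx₀ : 0 < x := (exp_pos 8).trans_le hx
  have hlog : 8 ≤ log x := (le_log_iff_exp_le hx₀).2 hx
  calc 5 * log x = 10 * (log x / 2) := by ring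
    _ ≤ exp (log x / 2) := ten_mul_le_exp (by linarith)
    _ = √x := by rw [exp_half, exp_log hx₀]

lemma sqrt_rpow_mul_sqrt_rpow {x : ℝ} (hx : 0 ≤ x) (s : ℝ) : √x ^ s * √x ^ s = x ^ s := by
  rw [← mul_rpow (sqrt_nonneg x) (sqrt_nonneg x), mul_self_sqrt hx]

lemma two_mul_log_le_sqrt_rpow {s x : ℝ} (hs : 0 < s) (hx : exp (16 / s ^ 2) ≤ x) :
    2 * log x ≤ √x ^ s := by
  have hx₀ : 0 < x := (exp_pos _).trans_le hx
  have hlog : 16 / s ^ 2 ≤ log x := (le_log_iff_exp_le hx₀).2 hx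
  have hlog₀ : 0 ≤ log x := le_trans (by positivity) hlog
  set r := √(log x)
  have hr : r ^ 2 = log x := sq_sqrt hlog₀
  have hsr : 4 / s ≤ r := le_sqrt_of_sq_le (by rw [div_pow]; norm_num [hlog])
  rw [div_le_iff₀ hs] at hsr
  calc 2 * log x ≤ 1 + 2 * r + (2 * r) ^ 2 / 2 := by linarith [sqrt_nonneg (log x)]
    _ ≤ exp (2 * r) := quadratic_le_exp_of_nonneg (by positivity)
    _ ≤ exp (log x / 2 * s) := by
      rw [exp_le_exp, ← hr]
      nlinarith [sqrt_nonneg (log x)]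
    _ = √x ^ s := by rw [rpow_def_of_pos (sqrt_pos.2 hx₀), log_sqrt hx₀.le]

lemma log_add_one_le_of_mul_log_two_le {x y : ℝ} (hx : exp 16 ≤ x) (hy : 0 ≤ y)
    (hxy : y * log 2 ≤ x * log (y + 1)) : log (y + 1) ≤ 3 / 2 * log x := by
  have hx₀ : 0 < x := (exp_pos 16).trans_le hx
  have hlog : 16 ≤ log x := (le_log_iff_exp_le hx₀).2 hx
  by_contra! hlt
  set u := log (y + 1) with hu
  set w := exp (u / 3) with hw
  have huw : 10 * (u / 3) ≤ w := ten_mul_le_exp (by linarith)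
  have hyw : y + 1 = w ^ 3 := by
    rw [hw, ← exp_nat_mul, ← exp_log (by linarith : 0 < y + 1), ← hu]
    congr 1
    push_cast
    ring
  have hxw : x ≤ w ^ 2 := by
    rw [hw, ← exp_nat_mul, ← log_le_iff_le_exp hx₀]
    push_cast
    linarith
  have hupper : (w ^ 3 - 1) * log 2 ≤ w ^ 2 * (3 / 10 * w) := by
    calc (w ^ 3 - 1) * log 2 = y * log 2 := by rw [← hyw, add_sub_cancel_right]
      _ ≤ x * u := hxy
      _ ≤ w ^ 2 * (3 / 10 * w) := by
        gcongr
        · linarith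
        · linarith
  have hw₃ : 80 ≤ w ^ 3 := by
    calc 80 ≤ w := by linarith
      _ ≤ w ^ 3 := le_self_pow₀ (by linarith) (by norm_num)
  nlinarith [hupper, log_two_gt_d9]

lemma primeCounting_mul_log_le {x : ℝ} (hx : exp 8 ≤ x) : π ⌊x⌋₊ * log x ≤ 3 * x := by
  have hx₁ : 1 < x := (one_lt_exp_iff.2 (by norm_num)).trans_le hx
  have hlog₀ : 0 < log x := log_pos hx₁
  have hlog_four : log 4 < 1.4 := by
    rw [show (4 : ℝ) = 2 ^ 2 by norm_num, log_pow]
    push_cast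
    linarith [log_two_lt_d9]
  have hsqrt : √x * log x ≤ x / 5 := by
    calc √x * log x ≤ √x * (√x / 5) := by gcongr; linarith [five_mul_log_le_sqrt hx]
      _ = x / 5 := by rw [← mul_div_assoc, mul_self_sqrt (by linarith)]
  calc π ⌊x⌋₊ * log x ≤ (log 4 * x / (log x / 2) + √x) * log x := by
        gcongr
        rw [← log_sqrt (by linarith)]
        exact Chebyshev.pi_le_log4_mul_div hx₁
    _ = 2 * log 4 * x + √x * log x := by field_simp
    _ ≤ 3 * x := by nlinarith

section NthPrime

variable {n : ℕ}

lemma primeCounting_nthPrime (hn : n ≠ 0) : π (nthPrime n) = n := by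
  rw [nthPrime, Nat.primeCounting, Nat.primeCounting',
    Nat.count_nth_succ_of_infinite Nat.infinite_setOfPred_prime]
  exact Nat.sub_add_cancel (Nat.one_le_iff_ne_zero.2 hn)

lemma lt_nthPrime (n : ℕ) : n < nthPrime n := by
  have := Nat.add_two_le_nth_prime (n - 1)
  rw [nthPrime]
  lia

lemma mul_log_le_nthPrime (hn : exp 8 ≤ n) : n * log n ≤ 3 * nthPrime n := by
  have hn₀ : (0 : ℝ) < n := (exp_pos 8).trans_le hn
  have hn_ne : n ≠ 0 := by exact_mod_cast hn₀.ne'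
  have hnp : (n : ℝ) ≤ nthPrime n := by exact_mod_cast (lt_nthPrime n).le
  calc n * log n ≤ n * log (nthPrime n) := by gcongr
    _ ≤ 3 * nthPrime n := by
      simpa only [Nat.floor_natCast, primeCounting_nthPrime hn_ne] using
        primeCounting_mul_log_le (hn.trans hnp)

lemma nthPrime_mul_log_two_le (hn : n ≠ 0) :
    nthPrime n * log 2 ≤ (n + 1) * log (nthPrime n + 1) := by
  have hp : (1 : ℝ) < nthPrime n := by
    exact_mod_cast (Nat.one_le_iff_ne_zero.2 hn).trans_lt (lt_nthPrime n)
  have hπ := Chebyshev.pi_ge (nthPrime n)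
  rw [primeCounting_nthPrime hn, div_le_iff₀ (log_pos hp), sub_le_iff_le_add] at hπ
  calc nthPrime n * log 2 ≤ n * log (nthPrime n) + log (nthPrime n + 1) := hπ
    _ ≤ n * log (nthPrime n + 1) + log (nthPrime n + 1) := by gcongr; linarith
    _ = (n + 1) * log (nthPrime n + 1) := by ring

lemma nthPrime_le {x : ℝ} (hn : n ≠ 0) (hx : exp 16 ≤ x) (hnx : n + 1 ≤ x) :
    nthPrime n ≤ 5 * n * log x := by
  have hn₁ : (1 : ℝ) ≤ n := by exact_mod_cast Nat.one_le_iff_ne_zero.2 hn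
  have hcheb := nthPrime_mul_log_two_le hn
  have hlog_nonneg : 0 ≤ log (nthPrime n + 1 : ℝ) := log_nonneg (by simp)
  have hlog : log (nthPrime n + 1) ≤ 3 / 2 * log x :=
    log_add_one_le_of_mul_log_two_le hx (Nat.cast_nonneg _) (hcheb.trans (by gcongr))
  have hmain : nthPrime n * 0.6 ≤ 3 * (n * log x) := by
    calc nthPrime n * 0.6 ≤ nthPrime n * log 2 := by gcongr; linarith [log_two_gt_d9]
      _ ≤ (n + 1) * log (nthPrime n + 1) := hcheb
      _ ≤ (n + n) * (3 / 2 * log x) := by gcongr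
      _ = 3 * (n * log x) := by ring
  linarith

end NthPrime

section PowerSums

variable {t : ℝ}

lemma antitoneOn_rpow_neg_Icc (ht : 0 ≤ t) {a : ℝ} (ha : 0 < a) (b : ℝ) :
    AntitoneOn (fun u : ℝ ↦ u ^ (-t)) (Set.Icc a b) :=
  (antitoneOn_rpow_Ioi_of_exponent_nonpos (neg_nonpos.2 ht)).mono
    fun _ hu ↦ ha.trans_le hu.1

lemma integral_one_rpow_neg (ht : t < 1) (b : ℝ) :
    ∫ u in 1..b, u ^ (-t) = (b ^ (1 - t) - 1) / (1 - t) := by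
  rw [integral_rpow (Or.inl (by linarith)), one_rpow, neg_add_eq_sub]

lemma le_sum_rpow_neg (ht₀ : 0 ≤ t) (ht₁ : t < 1) (N : ℕ) :
    (((N : ℝ) + 1) ^ (1 - t) - 1) / (1 - t) ≤ ∑ n ∈ Icc 1 N, (n : ℝ) ^ (-t) := by
  have h := (antitoneOn_rpow_neg_Icc ht₀ (by simp) _).integral_le_sum_Ico
    (Nat.le_add_left 1 N)
  push_cast at h
  rwa [integral_one_rpow_neg ht₁] at h

lemma sum_rpow_neg_le (ht₀ : 0 ≤ t) (ht₁ : t < 1) (N : ℕ) :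
    ∑ n ∈ Icc 1 N, (n : ℝ) ^ (-t) ≤ (N : ℝ) ^ (1 - t) / (1 - t) := by
  have hs : 0 < 1 - t := by linarith
  rcases Nat.eq_zero_or_pos N with rfl | hN
  · simp [zero_rpow hs.ne']
  have htail := (antitoneOn_rpow_neg_Icc ht₀ (by simp) _).sum_le_integral_Ico hN
  rw [Nat.cast_one, integral_one_rpow_neg ht₁, sum_Ico_add' (fun n : ℕ ↦ (n : ℝ) ^ (-t))] at htail
  calc ∑ n ∈ Icc 1 N, (n : ℝ) ^ (-t)
      = 1 + ∑ n ∈ Ico (1 + 1) (N + 1), (n : ℝ) ^ (-t) := by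
        rw [← Ico_add_one_right_eq_Icc, sum_eq_sum_Ico_succ_bot (by lia), Nat.cast_one, one_rpow]
    _ ≤ 1 / (1 - t) + ((N : ℝ) ^ (1 - t) - 1) / (1 - t) := by
      gcongr
      exact (one_le_div hs).2 (by linarith)
    _ = (N : ℝ) ^ (1 - t) / (1 - t) := by ring

end PowerSums

section PrimePowerSums

variable {t x : ℝ}

lemma le_sum_nthPrime_rpow_neg (ht₀ : 0 ≤ t) (ht₁ : t < 1) (hx : exp 16 ≤ x) {N : ℕ}
    (hN : N + 1 ≤ x) :
    (5 * log x) ^ (-t) * ((((N : ℝ) + 1) ^ (1 - t) - 1) / (1 - t)) ≤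
      ∑ n ∈ Icc 1 N, (nthPrime n : ℝ) ^ (-t) := by
  have hlog : 0 < log x := log_pos ((one_lt_exp_iff.2 (by norm_num)).trans_le hx)
  have hterm : ∀ n ∈ Icc 1 N,
      (5 * log x) ^ (-t) * (n : ℝ) ^ (-t) ≤ (nthPrime n : ℝ) ^ (-t) := by
    intro n hn
    obtain ⟨hn₁, hnN⟩ := mem_Icc.1 hn
    have hn_ne : n ≠ 0 := by lia
    have hnx : (n : ℝ) + 1 ≤ x := le_trans (by gcongr) hN
    have hp₀ : (0 : ℝ) < nthPrime n := by exact_mod_cast (lt_nthPrime n).pos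
    rw [← mul_rpow (by positivity) (Nat.cast_nonneg n), mul_right_comm]
    exact rpow_le_rpow_of_nonpos hp₀ (nthPrime_le hn_ne hx hnx) (by linarith)
  calc (5 * log x) ^ (-t) * ((((N : ℝ) + 1) ^ (1 - t) - 1) / (1 - t))
      ≤ (5 * log x) ^ (-t) * ∑ n ∈ Icc 1 N, (n : ℝ) ^ (-t) := by
        gcongr
        exact le_sum_rpow_neg ht₀ ht₁ N
    _ ≤ ∑ n ∈ Icc 1 N, (nthPrime n : ℝ) ^ (-t) := by
      rw [mul_sum]
      exact sum_le_sum hterm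

lemma nthPrime_rpow_neg_le (ht₀ : 0 ≤ t) {n : ℕ} (hn : n ≠ 0) :
    (nthPrime n : ℝ) ^ (-t) ≤ (n : ℝ) ^ (-t) :=
  rpow_le_rpow_of_nonpos (by positivity) (by exact_mod_cast (lt_nthPrime n).le) (by linarith)

lemma nthPrime_rpow_neg_le_of_sqrt_le (ht₀ : 0 ≤ t) (hx : exp 16 ≤ x) {n : ℕ} (hn : √x ≤ n) :
    (nthPrime n : ℝ) ^ (-t) ≤ (log x / 6) ^ (-t) * (n : ℝ) ^ (-t) := by
  have hx₀ : 0 < x := (exp_pos 16).trans_le hx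
  have hlog : 0 < log x := log_pos ((one_lt_exp_iff.2 (by norm_num)).trans_le hx)
  have hsqrt : exp 8 ≤ √x := by
    calc exp 8 = √(exp 16) := by rw [← exp_half]; norm_num
      _ ≤ √x := sqrt_le_sqrt hx
  have hn₀ : (0 : ℝ) < n := (sqrt_pos.2 hx₀).trans_le hn
  have hlogn : log x / 2 ≤ log n := by
    rw [← log_sqrt hx₀.le]
    exact log_le_log (sqrt_pos.2 hx₀) hn
  have hp : log x / 6 * n ≤ nthPrime n := by nlinarith [mul_log_le_nthPrime (hsqrt.trans hn)]
  rw [← mul_rpow (by positivity) hn₀.le]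
  exact rpow_le_rpow_of_nonpos (by positivity) hp (by linarith)

lemma sum_nthPrime_rpow_neg_le (ht₀ : 0 ≤ t) (ht₁ : t < 1) (hx : exp 16 ≤ x) {N : ℕ}
    (hN : N ≤ x) :
    ∑ n ∈ Icc 1 N, (nthPrime n : ℝ) ^ (-t) ≤
      √x ^ (1 - t) / (1 - t) + (log x / 6) ^ (-t) * (x ^ (1 - t) / (1 - t)) := by
  have : 0 < 1 - t := sub_pos.2 ht₁
  have hlog : 0 < log x := log_pos ((one_lt_exp_iff.2 (by norm_num)).trans_le hx)
  have hsmall : ∑ n ∈ Icc 1 N with n ≤ ⌊√x⌋₊, (nthPrime n : ℝ) ^ (-t) ≤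
      √x ^ (1 - t) / (1 - t) := by
    calc ∑ n ∈ Icc 1 N with n ≤ ⌊√x⌋₊, (nthPrime n : ℝ) ^ (-t)
        ≤ ∑ n ∈ Icc 1 ⌊√x⌋₊, (nthPrime n : ℝ) ^ (-t) := by
          refine sum_le_sum_of_subset_of_nonneg (fun n hn ↦ ?_) fun _ _ _ ↦ by positivity
          simp only [mem_filter, mem_Icc] at hn ⊢
          exact ⟨hn.1.1, hn.2⟩
      _ ≤ ∑ n ∈ Icc 1 ⌊√x⌋₊, (n : ℝ) ^ (-t) := sum_le_sum fun n hn ↦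
        nthPrime_rpow_neg_le ht₀ (Nat.one_le_iff_ne_zero.1 (mem_Icc.1 hn).1)
      _ ≤ (⌊√x⌋₊ : ℝ) ^ (1 - t) / (1 - t) := sum_rpow_neg_le ht₀ ht₁ _
      _ ≤ √x ^ (1 - t) / (1 - t) := by gcongr; exact Nat.floor_le (sqrt_nonneg x)
  have hlarge : ∑ n ∈ Icc 1 N with ¬ n ≤ ⌊√x⌋₊, (nthPrime n : ℝ) ^ (-t) ≤
      (log x / 6) ^ (-t) * (x ^ (1 - t) / (1 - t)) := by
    calc ∑ n ∈ Icc 1 N with ¬ n ≤ ⌊√x⌋₊, (nthPrime n : ℝ) ^ (-t)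
        ≤ ∑ n ∈ Icc 1 N with ¬ n ≤ ⌊√x⌋₊, (log x / 6) ^ (-t) * (n : ℝ) ^ (-t) :=
          sum_le_sum fun n hn ↦ nthPrime_rpow_neg_le_of_sqrt_le ht₀ hx
            (Nat.lt_of_floor_lt (not_le.1 (mem_filter.1 hn).2)).le
      _ ≤ ∑ n ∈ Icc 1 N, (log x / 6) ^ (-t) * (n : ℝ) ^ (-t) :=
        sum_le_sum_of_subset_of_nonneg (filter_subset _ _) fun _ _ _ ↦ by positivity
      _ ≤ (log x / 6) ^ (-t) * ((N : ℝ) ^ (1 - t) / (1 - t)) := by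
        rw [← mul_sum]
        gcongr
        exact sum_rpow_neg_le ht₀ ht₁ N
      _ ≤ (log x / 6) ^ (-t) * (x ^ (1 - t) / (1 - t)) := by gcongr
  rw [← sum_filter_add_sum_filter_not (Icc 1 N) (· ≤ ⌊√x⌋₊)]
  exact add_le_add hsmall hlarge

lemma exp_sixteen_le_of_exp_div_sq_le (ht₀ : 0 ≤ t) (ht₁ : t < 1)
    (hx : exp (16 / (1 - t) ^ 2) ≤ x) : exp 16 ≤ x := by
  have hs : 0 < 1 - t := by linarith
  refine le_trans (exp_le_exp.2 ?_) hx
  exact le_div_self (by norm_num) (by positivity) (pow_le_one₀ hs.le (by linarith))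

lemma seven_eighths_mul_rpow_lt (ht₀ : 0 ≤ t) (ht₁ : t < 1)
    (hx : exp (16 / (1 - t) ^ 2) ≤ x) :
    7 / 8 * x ^ (1 - t) < ((⌊x - 1⌋₊ : ℝ) + 1) ^ (1 - t) - 1 := by
  have hs : 0 < 1 - t := by linarith
  have hx₁₆ : exp 16 ≤ x := exp_sixteen_le_of_exp_div_sq_le ht₀ ht₁ hx
  have hx₀ : 0 < x := (exp_pos 16).trans_le hx₁₆
  have hlog : 16 ≤ log x := (le_log_iff_exp_le hx₀).2 hx₁₆
  have hx_ge : 10 ≤ x := by linarith [log_le_sub_one_of_pos hx₀]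
  have hpow : 40 < x ^ (1 - t) := by
    have hsqrt : 32 ≤ √x ^ (1 - t) := by linarith [two_mul_log_le_sqrt_rpow hs hx]
    calc (40 : ℝ) < 32 * 32 := by norm_num
      _ ≤ √x ^ (1 - t) * √x ^ (1 - t) := by gcongr
      _ = x ^ (1 - t) := sqrt_rpow_mul_sqrt_rpow hx₀.le _
  have hfloor : 9 / 10 * x ^ (1 - t) ≤ ((⌊x - 1⌋₊ : ℝ) + 1) ^ (1 - t) := by
    calc 9 / 10 * x ^ (1 - t) ≤ (9 / 10) ^ (1 - t) * x ^ (1 - t) := by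
          gcongr
          exact self_le_rpow_of_le_one (by norm_num) (by norm_num) (by linarith)
      _ = (9 / 10 * x) ^ (1 - t) := by rw [mul_rpow (by norm_num) hx₀.le]
      _ ≤ ((⌊x - 1⌋₊ : ℝ) + 1) ^ (1 - t) := by
        gcongr
        linarith [Nat.lt_floor_add_one (x - 1)]
  linarith

lemma lt_sum_nthPrime_rpow_neg (ht₀ : 0 ≤ t) (ht₁ : t < 1)
    (hx : exp (16 / (1 - t) ^ 2) ≤ x) :
    7 / 40 * (x ^ (1 - t) / ((1 - t) * log x ^ t)) <
      ∑ n ∈ Icc 1 ⌊x - 1⌋₊, (nthPrime n : ℝ) ^ (-t) := by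
  have hs : 0 < 1 - t := by linarith
  have hx₁₆ : exp 16 ≤ x := exp_sixteen_le_of_exp_div_sq_le ht₀ ht₁ hx
  have hx₁ : 1 < x := (one_lt_exp_iff.2 (by norm_num)).trans_le hx₁₆
  have hlog : 0 < log x := log_pos hx₁
  have hN : (⌊x - 1⌋₊ : ℝ) + 1 ≤ x := by linarith [Nat.floor_le (sub_nonneg.2 hx₁.le)]
  have hcoeff : (5 * log x ^ t)⁻¹ ≤ (5 * log x) ^ (-t) := by
    rw [rpow_neg (by positivity), mul_rpow (by norm_num) hlog.le]
    gcongr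
    exact rpow_le_self_of_one_le (by norm_num) ht₁.le
  have hpow := seven_eighths_mul_rpow_lt ht₀ ht₁ hx
  calc 7 / 40 * (x ^ (1 - t) / ((1 - t) * log x ^ t))
      = (5 * log x ^ t)⁻¹ * (7 / 8 * x ^ (1 - t) / (1 - t)) := by field_simp; norm_num
    _ < (5 * log x ^ t)⁻¹ * ((((⌊x - 1⌋₊ : ℝ) + 1) ^ (1 - t) - 1) / (1 - t)) := by gcongr
    _ ≤ (5 * log x) ^ (-t) * ((((⌊x - 1⌋₊ : ℝ) + 1) ^ (1 - t) - 1) / (1 - t)) := by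
      have : 0 ≤ ((⌊x - 1⌋₊ : ℝ) + 1) ^ (1 - t) - 1 := le_trans (by positivity) hpow.le
      gcongr
    _ ≤ ∑ n ∈ Icc 1 ⌊x - 1⌋₊, (nthPrime n : ℝ) ^ (-t) :=
      le_sum_nthPrime_rpow_neg ht₀ ht₁ hx₁₆ hN

lemma sum_nthPrime_rpow_neg_lt (ht₀ : 0 ≤ t) (ht₁ : t < 1)
    (hx : exp (16 / (1 - t) ^ 2) ≤ x) :
    ∑ n ∈ Icc 1 ⌊x - 1⌋₊, (nthPrime n : ℝ) ^ (-t) <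
      20 / 3 * (x ^ (1 - t) / ((1 - t) * log x ^ t)) := by
  have hs : 0 < 1 - t := by linarith
  have hx₁₆ : exp 16 ≤ x := exp_sixteen_le_of_exp_div_sq_le ht₀ ht₁ hx
  have hx₀ : 0 < x := (exp_pos 16).trans_le hx₁₆
  have hlog : 16 ≤ log x := (le_log_iff_exp_le hx₀).2 hx₁₆
  have hN : (⌊x - 1⌋₊ : ℝ) ≤ x := by
    linarith [Nat.floor_le (a := x - 1) (by linarith [log_le_sub_one_of_pos hx₀])]
  have hcoeff : (log x / 6) ^ (-t) ≤ 6 / log x ^ t := by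
    rw [rpow_neg (by positivity), div_rpow (by positivity) (by norm_num), inv_div]
    gcongr
    exact rpow_le_self_of_one_le (by norm_num) ht₁.le
  set y := √x ^ (1 - t)
  have hyx : x ^ (1 - t) = y * y := (sqrt_rpow_mul_sqrt_rpow hx₀.le _).symm
  have hlog_rpow : log x ^ t ≤ y / 2 := by
    calc log x ^ t ≤ log x := rpow_le_self_of_one_le (by linarith) ht₁.le
      _ ≤ y / 2 := by linarith [two_mul_log_le_sqrt_rpow hs hx]
  calc ∑ n ∈ Icc 1 ⌊x - 1⌋₊, (nthPrime n : ℝ) ^ (-t)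
      ≤ y / (1 - t) + (log x / 6) ^ (-t) * (x ^ (1 - t) / (1 - t)) :=
        sum_nthPrime_rpow_neg_le ht₀ ht₁ hx₁₆ hN
    _ ≤ y / (1 - t) + 6 / log x ^ t * (x ^ (1 - t) / (1 - t)) := by gcongr
    _ = (y * log x ^ t + 6 * (y * y)) / ((1 - t) * log x ^ t) := by rw [hyx]; field_simp
    _ ≤ (y * (y / 2) + 6 * (y * y)) / ((1 - t) * log x ^ t) := by gcongr
    _ < 20 / 3 * (y * y) / ((1 - t) * log x ^ t) := by
      have : 0 < y * y := by positivity
      gcongr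
      linarith
    _ = 20 / 3 * (x ^ (1 - t) / ((1 - t) * log x ^ t)) := by rw [hyx, mul_div_assoc]

end PrimePowerSums

theorem sum_reciprocal_prime_powers_shifted_bounds_general
    {t x : ℝ} (ht₀ : 0 ≤ t) (ht₁ : t < 1) (hx : exp (16 / (1 - t) ^ 2) ≤ x) :
    7 / 40 * (x ^ (1 - t) / ((1 - t) * log x ^ t)) <
        (∑ n ∈ Icc 1 ⌊x - 1⌋₊, (nthPrime n : ℝ) ^ (-t)) ∧
      (∑ n ∈ Icc 1 ⌊x - 1⌋₊, (nthPrime n : ℝ) ^ (-t)) <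
        20 / 3 * (x ^ (1 - t) / ((1 - t) * log x ^ t)) :=
  ⟨lt_sum_nthPrime_rpow_neg ht₀ ht₁ hx, sum_nthPrime_rpow_neg_lt ht₀ ht₁ hx⟩

theorem sum_reciprocal_prime_powers_shifted_bounds
    (t x : ℝ) (ht₁ : 1 / 2 < t) (ht₂ : t < 1)
    (hx : 2 * Real.exp (16 / (1 - t) ^ 2) ≤ x) :
    7 / 40 * (x ^ (1 - t) / ((1 - t) * Real.log x ^ t)) <
        (∑ n ∈ Finset.Icc 1 ⌊x - 1⌋₊, (nthPrime n : ℝ) ^ (-t)) ∧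
      (∑ n ∈ Finset.Icc 1 ⌊x - 1⌋₊, (nthPrime n : ℝ) ^ (-t)) <
        20 / 3 * (x ^ (1 - t) / ((1 - t) * Real.log x ^ t)) :=
  sum_reciprocal_prime_powers_shifted_bounds_general (by linarith) ht₂
    (by linarith [exp_pos (16 / (1 - t) ^ 2)])
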